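/- In GL(2,ℤ), the images under the mod-2-and-determinant homomorphism onto S₃ × ℤ/2ℤ of any pair of finite-order elements generating GL(2,ℤ) would have to be a pair of elements of order 2 generating S₃ × ℤ/2ℤ; but two elements of order 2 generate a dihedral group, and GL(2,ℤ) is not dihedral (it contains a free subgroup of rank 2), giving a contradiction. Hence GL(2,ℤ) is not generated by two torsion elements. -/

import Mathlib

abbrev G2 := Matrix.GeneralLinearGroup (Fin 2) ℤ

theorem dih {Q : Type*} [Group Q] (a b : Q) (ha : a * a = 1) (hb : b * b = 1)
    (h : Subgroup.closure ({a, b} : Set Q) = ⊤) (x y : Q) : Commute (x * x) (y * y) := by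
  have ha' : a⁻¹ = a := inv_eq_of_mul_eq_one_left ha
  have hb' : b⁻¹ = b := inv_eq_of_mul_eq_one_left hb
  have hc : a * (a * b) * a⁻¹ = (a * b)⁻¹ := by
    rw [mul_inv_rev, ha', hb', ← mul_assoc, ha, one_mul]
  have hcn : ∀ n : ℤ, a * (a * b) ^ n * a⁻¹ = (a * b) ^ (-n) := by
    intro n
    rw [← conj_zpow, hc, inv_zpow, zpow_neg]
  have key : ∀ x : Q, ∃ n : ℤ, x = (a * b) ^ n ∨ x = (a * b) ^ n * a := by
    intro x
    have hx : x ∈ Subgroup.closure ({a, b} : Set Q) := h ▸ Subgroup.mem_top x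
    have stepa : ∀ x : Q, (∃ n : ℤ, x = (a * b) ^ n ∨ x = (a * b) ^ n * a) →
        ∃ n : ℤ, x * a = (a * b) ^ n ∨ x * a = (a * b) ^ n * a := by
      rintro x ⟨n, rfl | rfl⟩
      · exact ⟨n, Or.inr rfl⟩
      · exact ⟨n, Or.inl (by rw [mul_assoc, ha, mul_one])⟩
    have stepb : ∀ x : Q, (∃ n : ℤ, x = (a * b) ^ n ∨ x = (a * b) ^ n * a) →
        ∃ n : ℤ, x * b = (a * b) ^ n ∨ x * b = (a * b) ^ n * a := by
      rintro x ⟨n, rfl | rfl⟩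
      · refine ⟨n - 1, Or.inr ?_⟩
        rw [zpow_sub_one, mul_inv_rev, ha', hb', mul_assoc, mul_assoc, ha, mul_one]
      · exact ⟨n + 1, Or.inl (by rw [zpow_add_one, mul_assoc])⟩
    induction hx using Subgroup.closure_induction_right with
    | one => exact ⟨0, Or.inl (by simp)⟩
    | mul_right x hx y hy ih =>
      rcases hy with rfl | hy
      · exact stepa x ih
      · rw [Set.mem_singleton_iff] at hy; subst hy; exact stepb x ih
    | mul_inv_cancel x hx y hy ih =>
      rcases hy with rfl | hy
      · rw [ha']; exact stepa x ih
      · rw [Set.mem_singleton_iff] at hy; subst hy; rw [hb']; exact stepb x ih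
  have sq : ∀ x : Q, ∃ n : ℤ, x * x = (a * b) ^ n := by
    intro x
    obtain ⟨n, rfl | rfl⟩ := key x
    · exact ⟨n + n, (zpow_add _ _ _).symm⟩
    · refine ⟨0, ?_⟩
      have := hcn n
      rw [ha'] at this
      rw [mul_assoc, ← mul_assoc a, this, zpow_neg, mul_inv_cancel, zpow_zero]
  obtain ⟨n, hn⟩ := sq x
  obtain ⟨m, hm⟩ := sq y
  rw [hn, hm]
  exact (Commute.refl (a*b)).zpow_zpow n m

/-- elliptic bound -/
theorem scalar_of_trace (X : Matrix (Fin 2) (Fin 2) ℤ) (hd : X 0 0 * X 1 1 - X 0 1 * X 1 0 = 1)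
    (ht : 2 ≤ |X 0 0 + X 1 1|) (n : ℕ) (hn : 0 < n) (h : X ^ n = 1) : X = 1 ∨ X = -1 := by
  have ch : X * X = (X 0 0 + X 1 1) • X - 1 := by
    ext i j
    fin_cases i <;> fin_cases j <;>
      simp [-zsmul_eq_mul, Matrix.mul_apply, Fin.sum_univ_two, Matrix.smul_apply] <;> linarith
  have hrec : ∀ k : ℕ, ∃ a b : ℤ, |b| < |a| ∧
      X ^ (k + 1) = a • X - b • (1 : Matrix (Fin 2) (Fin 2) ℤ) := by
    intro k
    induction k with
    | zero => exact ⟨1, 0, by simp, by simp⟩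
    | succ k ih =>
      obtain ⟨a, b, hab, e⟩ := ih
      refine ⟨a * (X 0 0 + X 1 1) - b, a, ?_, ?_⟩
      · have h1 := abs_sub_abs_le_abs_sub (a * (X 0 0 + X 1 1)) b
        rw [abs_mul] at h1
        nlinarith [abs_nonneg a]
      · rw [pow_succ, e, sub_mul, smul_mul_assoc, ch, smul_mul_assoc, one_mul]
        module
  obtain ⟨k, rfl⟩ : ∃ k, n = k + 1 := ⟨n - 1, by omega⟩
  obtain ⟨a, b, hab, e⟩ := hrec k
  rw [h] at e
  have ha : a ≠ 0 := by
    rintro rfl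
    have := abs_nonneg b
    simp at hab
    omega
  have e00 := congrFun (congrFun e 0) 0
  have e01 := congrFun (congrFun e 0) 1
  have e10 := congrFun (congrFun e 1) 0
  have e11 := congrFun (congrFun e 1) 1
  simp [-zsmul_eq_mul, -zsmul_one, Matrix.smul_apply] at e00 e01 e10 e11
  replace e01 : X 0 1 = 0 := by simpa [ha] using e01
  replace e10 : X 1 0 = 0 := by simpa [ha] using e10
  have e3 : X 0 0 = X 1 1 := by
    apply mul_left_cancel₀ ha; linarith
  rw [e01, e3] at hd
  have : X 1 1 = 1 ∨ X 1 1 = -1 := by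
    apply mul_self_eq_one_iff.mp; linarith
  rcases this with h1 | h1
  · left; ext i j; fin_cases i <;> fin_cases j <;> simp [e01, e10, e3, h1]
  · right; ext i j; fin_cases i <;> fin_cases j <;> simp [e01, e10, e3, h1]

theorem det_cases (X : G2) : X.1 0 0 * X.1 1 1 - X.1 0 1 * X.1 1 0 = 1 ∨
    X.1 0 0 * X.1 1 1 - X.1 0 1 * X.1 1 0 = -1 := by
  have : IsUnit X.1.det := by
    exact (Matrix.isUnit_iff_isUnit_det _).mp X.isUnit
  rw [Matrix.det_fin_two] at this
  exact Int.isUnit_iff.mp this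

theorem torsion (X : G2) (h : IsOfFinOrder X) :
    (X * X = 1 ∨ X * X = -1) ∨
    (X.1 0 0 * X.1 1 1 - X.1 0 1 * X.1 1 0 = 1 ∧ Odd (X.1 0 0 + X.1 1 1)) := by
  obtain ⟨n, hn, hX⟩ := isOfFinOrder_iff_pow_eq_one.mp h
  have hX' : X.1 ^ n = 1 := by
    have := congrArg Units.val hX
    simpa using this
  rcases det_cases X with hd | hd
  · by_cases ht : 2 ≤ |X.1 0 0 + X.1 1 1|
    · left; left
      ext1
      rcases scalar_of_trace X.1 hd ht n hn hX' with h | h <;> simp [h]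
    · push Not at ht
      rw [abs_lt] at ht
      by_cases h0 : X.1 0 0 + X.1 1 1 = 0
      · left; right
        have h1 : X.1 1 1 = - X.1 0 0 := by linarith
        rw [h1] at hd
        apply Units.ext
        ext i j
        fin_cases i <;> fin_cases j <;> simp [Matrix.mul_apply, Fin.sum_univ_two, h1] <;> linarith
      · right
        refine ⟨hd, ?_⟩
        rw [Int.odd_iff]; omega
  · left
    left
    by_cases h0 : X.1 0 0 + X.1 1 1 = 0
    · have h1 : X.1 1 1 = - X.1 0 0 := by linarith
      rw [h1] at hd
      apply Units.ext
      ext i j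
      fin_cases i <;> fin_cases j <;> simp [Matrix.mul_apply, Fin.sum_univ_two, h1] <;> linarith
    · exfalso
      have hpos : 0 < (X.1 0 0 + X.1 1 1) ^ 2 := by positivity
      have m00 : (X.1 * X.1) 0 0 = X.1 0 0 * X.1 0 0 + X.1 0 1 * X.1 1 0 := by
        simp [Matrix.mul_apply, Fin.sum_univ_two]
      have m11 : (X.1 * X.1) 1 1 = X.1 1 0 * X.1 0 1 + X.1 1 1 * X.1 1 1 := by
        simp [Matrix.mul_apply, Fin.sum_univ_two]
      have htr : (X.1 * X.1) 0 0 + (X.1 * X.1) 1 1 = (X.1 0 0 + X.1 1 1) ^ 2 + 2 := by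
        rw [m00, m11]; linear_combination (-2) * hd
      have hdd : (X.1 * X.1) 0 0 * (X.1 * X.1) 1 1 - (X.1 * X.1) 0 1 * (X.1 * X.1) 1 0 = 1 := by
        rw [← Matrix.det_fin_two, Matrix.det_mul, Matrix.det_fin_two, hd]; norm_num
      have := scalar_of_trace (X.1 * X.1) hdd
        (by rw [htr]; exact le_trans (by linarith) (le_abs_self _)) n hn
        (by rw [← pow_two, ← pow_mul, mul_comm, pow_mul, hX', one_pow])
      rcases this with h | h <;> rw [h] at htr <;> simp at htr <;> omega

def sgnF (x : ZMod 2) : ℤˣ := if x = 0 then 1 else -1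

theorem sgnF_add : ∀ x y, sgnF (x + y) = sgnF x * sgnF y := by decide

def eF (a b c d : ZMod 2) : ZMod 2 := a * b + c * d + b * c

theorem eF_mul : ∀ a b c d : ZMod 2, a * d - b * c = 1 → ∀ a' b' c' d' : ZMod 2,
    a' * d' - b' * c' = 1 →
    eF (a * a' + b * c') (a * b' + b * d') (c * a' + d * c') (c * b' + d * d') =
      eF a b c d + eF a' b' c' d' := by decide

theorem eF_odd : ∀ a b c d : ZMod 2, a * d - b * c = 1 → a + d = 1 → eF a b c d = 0 := by decide

theorem det_cast (X : G2) : (X.1 0 0 : ZMod 2) * X.1 1 1 - X.1 0 1 * X.1 1 0 = 1 := by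
  rcases det_cases X with h | h <;> have := congrArg (Int.cast : ℤ → ZMod 2) h <;> push_cast at this
  · exact this
  · rw [this]; decide

def eHom : G2 →* ℤˣ where
  toFun X := sgnF (eF (X.1 0 0) (X.1 0 1) (X.1 1 0) (X.1 1 1))
  map_one' := by simp [eF, sgnF]
  map_mul' X Y := by
    rw [← sgnF_add, ← eF_mul _ _ _ _ (det_cast X) _ _ _ _ (det_cast Y)]
    simp [Matrix.mul_apply, Fin.sum_univ_two]

def dHom : G2 →* ℤˣ := Matrix.GeneralLinearGroup.det

def U : G2 := ⟨!![1, 2; 0, 1], !![1, -2; 0, 1], by decide, by decide⟩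
def V : G2 := ⟨!![1, 0; 2, 1], !![1, 0; -2, 1], by decide, by decide⟩
def U1 : G2 := ⟨!![1, 1; 0, 1], !![1, -1; 0, 1], by decide, by decide⟩
def R : G2 := ⟨!![1, 0; 0, -1], !![1, 0; 0, -1], by decide, by decide⟩

theorem eU : eHom U1 = -1 := by simp [eHom, U1, eF, sgnF]
theorem dU : dHom U1 = 1 := by ext; simp [dHom, U1]
theorem dR : dHom R = -1 := by ext; simp [dHom, R]


theorem not_gen (A B : G2) (h : Subgroup.closure ({A, B} : Set G2) = ⊤)
    (hd : A.1 0 0 * A.1 1 1 - A.1 0 1 * A.1 1 0 = 1) (ho : Odd (A.1 0 0 + A.1 1 1)) : False := by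
  have dA : dHom A = 1 := by ext; simp [dHom, Matrix.det_fin_two, hd]
  have eA : eHom A = 1 := by
    have h2 : (A.1 0 0 : ZMod 2) + A.1 1 1 = 1 := by
      obtain ⟨k, hk⟩ := ho
      have := congrArg (Int.cast : ℤ → ZMod 2) hk
      push_cast at this
      rw [this, show (2 : ZMod 2) = 0 from rfl]; simp
    simp [eHom, eF_odd _ _ _ _ (det_cast A) h2, sgnF]
  have key : ∀ f : G2 →* ℤˣ, f A = 1 → f B = 1 → ∀ g, f g = 1 := by
    intro f h1 h2 g
    have : Subgroup.closure ({A, B} : Set G2) ≤ f.ker := by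
      rw [Subgroup.closure_le]
      rintro x (rfl | rfl)
      · exact h1
      · exact h2
    exact this (h ▸ Subgroup.mem_top g)
  rcases Int.units_eq_one_or (eHom B) with e | e
  · have := key eHom eA e U1
    rw [eU] at this; exact absurd this (by decide)
  · rcases Int.units_eq_one_or (dHom B) with d | d
    · have := key dHom dA d R
      rw [dR] at this; exact absurd this (by decide)
    · have := key (eHom * dHom) (by simp [eA, dA]) (by simp [e, d]) U1
      rw [MonoidHom.mul_apply, eU, dU] at this; exact absurd this (by decide)

theorem not_inv (A B : G2) (h : Subgroup.closure ({A, B} : Set G2) = ⊤)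
    (hA : A * A = 1 ∨ A * A = -1) (hB : B * B = 1 ∨ B * B = -1) : False := by
  have hz : ∀ X : G2, X = 1 ∨ X = -1 → X ∈ Subgroup.center G2 := by
    rintro X (rfl | rfl)
    · exact one_mem _
    · rw [Subgroup.mem_center_iff]; intro g; simp
  let q := QuotientGroup.mk' (Subgroup.center G2)
  have hq : ∀ X : G2, X = 1 ∨ X = -1 → q X = 1 := fun X hX =>
    (QuotientGroup.eq_one_iff X).mpr (hz X hX)
  have hc : Subgroup.closure ({q A, q B} : Set _) = ⊤ := by
    rw [← Set.image_pair, ← MonoidHom.map_closure, h, ← MonoidHom.range_eq_map]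
    exact MonoidHom.range_eq_top.mpr (QuotientGroup.mk'_surjective _)
  have := dih (q A) (q B) (by rw [← map_mul]; exact hq _ hA) (by rw [← map_mul]; exact hq _ hB)
    hc (q U) (q V)
  have h2 : q ((U * U) * (V * V)) = q ((V * V) * (U * U)) := by simpa using this.eq
  have h3 := QuotientGroup.eq.mp h2
  rw [Subgroup.mem_center_iff] at h3
  have h4 := congrArg Units.val (h3 U)
  revert h4
  simp [U, V]

theorem free : Function.Injective (FreeGroup.lift ![U, V] : FreeGroup (Fin 2) →* G2) := by
  have nz : ∀ g : G2, g.1 0 0 ≠ 0 ∨ g.1 1 0 ≠ 0 := by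
    intro g
    by_contra! hh
    rcases det_cases g with h | h <;> simp [hh.1, hh.2] at h
  have u0 (g : G2) : (U * g).1 0 0 = g.1 0 0 + 2 * g.1 1 0 := by
    simp [U, Matrix.mul_apply, Fin.sum_univ_two]
  have u1 (g : G2) : (U * g).1 1 0 = g.1 1 0 := by
    simp [U, Matrix.mul_apply, Fin.sum_univ_two]
  have ui0 (g : G2) : (U⁻¹ * g).1 0 0 = g.1 0 0 - 2 * g.1 1 0 := by
    rw [show U⁻¹ = ⟨!![1, -2; 0, 1], !![1, 2; 0, 1], by decide, by decide⟩ from rfl]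
    simp [Matrix.mul_apply, Fin.sum_univ_two]; ring
  have ui1 (g : G2) : (U⁻¹ * g).1 1 0 = g.1 1 0 := by
    rw [show U⁻¹ = ⟨!![1, -2; 0, 1], !![1, 2; 0, 1], by decide, by decide⟩ from rfl]
    simp [Matrix.mul_apply, Fin.sum_univ_two]
  have v0 (g : G2) : (V * g).1 0 0 = g.1 0 0 := by
    simp [V, Matrix.mul_apply, Fin.sum_univ_two]
  have v1 (g : G2) : (V * g).1 1 0 = 2 * g.1 0 0 + g.1 1 0 := by
    simp [V, Matrix.mul_apply, Fin.sum_univ_two]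
  have vi0 (g : G2) : (V⁻¹ * g).1 0 0 = g.1 0 0 := by
    rw [show V⁻¹ = ⟨!![1, 0; -2, 1], !![1, 0; 2, 1], by decide, by decide⟩ from rfl]
    simp [Matrix.mul_apply, Fin.sum_univ_two]
  have vi1 (g : G2) : (V⁻¹ * g).1 1 0 = g.1 1 0 - 2 * g.1 0 0 := by
    rw [show V⁻¹ = ⟨!![1, 0; -2, 1], !![1, 0; 2, 1], by decide, by decide⟩ from rfl]
    simp [Matrix.mul_apply, Fin.sum_univ_two]; ring
  let X0 : Set G2 := {g | g.1 1 0 ^ 2 ≤ g.1 0 0 * g.1 1 0}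
  let Y0 : Set G2 := {g | g.1 0 0 * g.1 1 0 < - g.1 1 0 ^ 2}
  let X1 : Set G2 := {g | g.1 0 0 ^ 2 < g.1 0 0 * g.1 1 0 ∨ g.1 0 0 = 0}
  let Y1 : Set G2 := {g | g.1 0 0 * g.1 1 0 ≤ - g.1 0 0 ^ 2 ∧ g.1 0 0 ≠ 0}
  have d00 : ∀ g : G2, g ∈ X0 → g ∈ X1 → False := by
    intro g h0 h1
    simp only [X0, X1, Set.mem_ofPred_eq] at h0 h1
    rcases h1 with h1 | h1
    · nlinarith [sq_nonneg (g.1 0 0 - g.1 1 0)]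
    · rcases nz g with h | h
      · exact h h1
      · have : 0 < g.1 1 0 ^ 2 := by positivity
        rw [h1] at h0; linarith
  have d11 : ∀ g : G2, g ∈ Y0 → g ∈ Y1 → False := by
    intro g h0 h1
    simp only [Y0, Y1, Set.mem_ofPred_eq] at h0 h1
    nlinarith [sq_nonneg (g.1 0 0 + g.1 1 0)]
  have x0 : ∀ g : G2, g ∉ Y0 → U * g ∈ X0 := by
    intro g h
    simp only [X0, Y0, Set.mem_ofPred_eq, not_lt, u0, u1] at h ⊢
    nlinarith
  have y0 : ∀ g : G2, g ∉ X0 → U⁻¹ * g ∈ Y0 := by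
    intro g h
    simp only [X0, Y0, Set.mem_ofPred_eq, not_le, ui0, ui1] at h ⊢
    nlinarith
  have x1 : ∀ g : G2, g ∉ Y1 → V * g ∈ X1 := by
    intro g h
    simp only [X1, Y1, Set.mem_ofPred_eq, v0, v1] at h ⊢
    by_cases h0 : g.1 0 0 = 0
    · exact Or.inr h0
    · left
      have : ¬ (g.1 0 0 * g.1 1 0 ≤ - g.1 0 0 ^ 2) := fun h' => h ⟨h', h0⟩
      nlinarith
  have y1 : ∀ g : G2, g ∉ X1 → V⁻¹ * g ∈ Y1 := by
    intro g h
    simp only [X1, Y1, Set.mem_ofPred_eq, vi0, vi1, not_or, not_lt] at h ⊢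
    exact ⟨by nlinarith [h.1], h.2⟩
  have xy00 : ∀ g : G2, g ∈ X0 → g ∈ Y0 → False := by
    intro g h0 h1
    simp only [X0, Y0, Set.mem_ofPred_eq] at h0 h1
    nlinarith [sq_nonneg (g.1 1 0)]
  have xy01 : ∀ g : G2, g ∈ X0 → g ∈ Y1 → False := by
    intro g h0 h1
    simp only [X0, Y1, Set.mem_ofPred_eq] at h0 h1
    have h2 := h1.2
    have : 0 < g.1 0 0 ^ 2 := by positivity
    nlinarith [sq_nonneg (g.1 1 0)]
  have xy10 : ∀ g : G2, g ∈ X1 → g ∈ Y0 → False := by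
    intro g h0 h1
    simp only [X1, Y0, Set.mem_ofPred_eq] at h0 h1
    rcases h0 with h0 | h0
    · nlinarith [sq_nonneg (g.1 1 0), sq_nonneg (g.1 0 0)]
    · rw [h0] at h1; nlinarith [sq_nonneg (g.1 1 0)]
  have xy11 : ∀ g : G2, g ∈ X1 → g ∈ Y1 → False := by
    intro g h0 h1
    simp only [X1, Y1, Set.mem_ofPred_eq] at h0 h1
    rcases h0 with h0 | h0
    · nlinarith [sq_nonneg (g.1 0 0)]
    · exact h1.2 h0
  apply FreeGroup.injective_lift_of_ping_pong (α := G2) ![U, V] ![X0, X1] ![Y0, Y1]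
  · intro i
    fin_cases i
    · exact ⟨1, by simp [X0]⟩
    · exact ⟨⟨!![0, 1; 1, 0], !![0, 1; 1, 0], by decide, by decide⟩, by simp [X1]⟩
  · intro i j hij
    fin_cases i <;> fin_cases j <;> first | exact absurd rfl hij | skip
    · exact Set.disjoint_left.mpr d00
    · exact Set.disjoint_left.mpr fun g h1 h2 => d00 g h2 h1
  · intro i j hij
    fin_cases i <;> fin_cases j <;> first | exact absurd rfl hij | skip
    · exact Set.disjoint_left.mpr d11
    · exact Set.disjoint_left.mpr fun g h1 h2 => d11 g h2 h1
  · intro i j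
    fin_cases i <;> fin_cases j
    · exact Set.disjoint_left.mpr xy00
    · exact Set.disjoint_left.mpr xy01
    · exact Set.disjoint_left.mpr xy10
    · exact Set.disjoint_left.mpr xy11
  · intro i
    fin_cases i
    · rintro _ ⟨g, hg, rfl⟩; exact x0 g hg
    · rintro _ ⟨g, hg, rfl⟩; exact x1 g hg
  · intro i
    fin_cases i
    · rintro _ ⟨g, hg, rfl⟩; exact y0 g hg
    · rintro _ ⟨g, hg, rfl⟩; exact y1 g hg


theorem GL2Z_has_free_subgroup_and_not_torsion_generated :
    (∃ f : FreeGroup (Fin 2) →* Matrix.GeneralLinearGroup (Fin 2) ℤ,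
      Function.Injective f) ∧
    ¬ ∃ A B : Matrix.GeneralLinearGroup (Fin 2) ℤ, IsOfFinOrder A ∧ IsOfFinOrder B ∧
      Subgroup.closure ({A, B} : Set (Matrix.GeneralLinearGroup (Fin 2) ℤ)) = ⊤ := by
  refine ⟨⟨_, free⟩, ?_⟩
  rintro ⟨A, B, hA, hB, h⟩
  rcases torsion A hA with hA | hA
  · rcases torsion B hB with hB | hB
    · exact not_inv A B h hA hB
    · exact not_gen B A (by rw [Set.pair_comm]; exact h) hB.1 hB.2
  · exact not_gen A B h hA.1 hA.2
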